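/- arXiv:2506.01162 — 5 statements merged into one kernel-verified Lean document; each statement's English description precedes it below -/
import Mathlib

section
/- Let P be a probability measure on a measurable space X, let H_1, ..., H_n be probability measures with densities with respect to a common sigma-finite dominating measure, let OPT := min over j of TV(H_j, P), and let H_{i*} achieve this minimum. Then for every j, TV(H_j, P) <= w_{i*}(H_j) + 2·OPT, where w_{i*}(H_j) := |H_j(S_{i*,j}) - P(S_{i*,j})| and S_{i*,j} is the Scheffé set of H_{i*} and H_j. -/
/-!
The Scheffé set `S` of `H i` and `H j` is a Hahn decomposition of the pair, so their total variation
distance is attained on it. The triangle inequality, used once for `tvDist` and once on `S`, then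
gives
`TV(H j, P) ≤ |H j S - H i S| + TV(H i, P) ≤ |H j S - P S| + |P S - H i S| + TV(H i, P)`,
where the middle term is at most `TV(H i, P)`.
-/

open MeasureTheory ENNReal

/-- Total variation distance: supremum over measurable sets of the absolute
difference of the masses. -/
noncomputable def tvDist {X : Type*} [MeasurableSpace X]
    (P Q : Measure X) : ℝ :=
  ⨆ S : {S : Set X // MeasurableSet S}, |(P S.1).toReal - (Q S.1).toReal|

/-- The Scheffé set `S_{i,j}` of the hypotheses with densities `h i`, `h j`:
the set where the density of `H_i` is below that of `H_j` (symmetrized as in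
the paper: `S_{i,j} = S_{j,i}` for `i > j`). -/
def scheffeSet {X : Type*} {n : ℕ} (h : Fin n → X → ℝ≥0∞) (i j : Fin n) :
    Set X :=
  if i ≤ j then {x | h i x < h j x} else {x | h j x < h i x}

section TVDist

variable {X : Type*} [MeasurableSpace X] {μ ν ρ : Measure X} {S T : Set X}

theorem tvDist_le {r : ℝ} (h : ∀ T, MeasurableSet T → |μ.real T - ν.real T| ≤ r) :
    tvDist μ ν ≤ r :=
  have : Nonempty {T : Set X // MeasurableSet T} := ⟨⟨∅, MeasurableSet.empty⟩⟩
  ciSup_le fun T => h T T.2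

theorem tvDist_comm (μ ν : Measure X) : tvDist μ ν = tvDist ν μ := by
  simp only [tvDist, abs_sub_comm]

theorem abs_measureReal_sub_le_tvDist [IsFiniteMeasure μ] [IsFiniteMeasure ν]
    (hT : MeasurableSet T) : |μ.real T - ν.real T| ≤ tvDist μ ν := by
  have bdd : BddAbove (Set.range fun S : {S : Set X // MeasurableSet S} =>
      |μ.real S - ν.real S|) := by
    refine ⟨max (μ.real Set.univ) (ν.real Set.univ), ?_⟩
    rintro _ ⟨S, rfl⟩
    exact abs_sub_le_of_nonneg_of_le
      measureReal_nonneg (le_max_of_le_left (measureReal_mono (Set.subset_univ _)))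
      measureReal_nonneg (le_max_of_le_right (measureReal_mono (Set.subset_univ _)))
  exact le_ciSup bdd ⟨T, hT⟩

theorem tvDist_triangle (μ ν ρ : Measure X)
    [IsFiniteMeasure μ] [IsFiniteMeasure ν] [IsFiniteMeasure ρ] :
    tvDist μ ρ ≤ tvDist μ ν + tvDist ν ρ :=
  tvDist_le fun T hT => (abs_sub_le _ (ν.real T) _).trans <|
    add_le_add (abs_measureReal_sub_le_tvDist hT) (abs_measureReal_sub_le_tvDist hT)

theorem tvDist_le_abs_sub_add_two_mul_tvDist
    [IsFiniteMeasure μ] [IsFiniteMeasure ν] [IsFiniteMeasure ρ]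
    (hS : MeasurableSet S) (hmax : tvDist μ ν = |μ.real S - ν.real S|) :
    tvDist μ ρ ≤ |μ.real S - ρ.real S| + 2 * tvDist ν ρ :=
  calc
    tvDist μ ρ ≤ tvDist μ ν + tvDist ν ρ := tvDist_triangle μ ν ρ
    _ = |μ.real S - ν.real S| + tvDist ν ρ := by rw [hmax]
    _ ≤ |μ.real S - ρ.real S| + |ρ.real S - ν.real S| + tvDist ν ρ := by
      gcongr
      exact abs_sub_le _ _ _
    _ ≤ |μ.real S - ρ.real S| + tvDist ν ρ + tvDist ν ρ := by
      rw [abs_sub_comm (ρ.real S)]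
      gcongr
      exact abs_measureReal_sub_le_tvDist hS
    _ = |μ.real S - ρ.real S| + 2 * tvDist ν ρ := by ring

end TVDist

section HahnDecomposition

variable {X : Type*} [MeasurableSpace X] {μ ν : Measure X} {S T : Set X}

theorem measureReal_le_of_isHahnDecomposition [IsFiniteMeasure ν]
    (hS : IsHahnDecomposition μ ν S) (hTS : T ⊆ S) : μ.real T ≤ ν.real T := by
  refine ENNReal.toReal_mono (measure_ne_top ν T) ?_
  simpa only [Measure.restrict_eq_self _ hTS] using hS.le_on T

theorem measureReal_sub_le_of_isHahnDecomposition [IsFiniteMeasure μ] [IsFiniteMeasure ν]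
    (hS : IsHahnDecomposition μ ν S) (hT : MeasurableSet T) :
    ν.real T - μ.real T ≤ ν.real S - μ.real S := by
  have outside : ν.real (T \ S) ≤ μ.real (T \ S) :=
    measureReal_le_of_isHahnDecomposition hS.compl fun _ hx => hx.2
  have inside : μ.real (S \ T) ≤ ν.real (S \ T) :=
    measureReal_le_of_isHahnDecomposition hS Set.sdiff_subset
  calc
    ν.real T - μ.real T
        = ν.real (S ∩ T) - μ.real (S ∩ T) + (ν.real (T \ S) - μ.real (T \ S)) := by
      rw [← measureReal_inter_add_sdiff (μ := ν) (s := T) hS.measurableSet,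
        ← measureReal_inter_add_sdiff (μ := μ) (s := T) hS.measurableSet, Set.inter_comm T S]
      ring
    _ ≤ ν.real (S ∩ T) - μ.real (S ∩ T) + (ν.real (S \ T) - μ.real (S \ T)) := by
      linarith
    _ = ν.real S - μ.real S := by
      rw [← measureReal_inter_add_sdiff (μ := ν) (s := S) hT,
        ← measureReal_inter_add_sdiff (μ := μ) (s := S) hT]
      ring

theorem tvDist_eq_abs_sub_of_isHahnDecomposition [IsFiniteMeasure μ] [IsFiniteMeasure ν]
    (hS : IsHahnDecomposition μ ν S) (hmass : μ Set.univ = ν Set.univ) :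
    tvDist μ ν = |μ.real S - ν.real S| := by
  refine le_antisymm (tvDist_le fun T hT => ?_) (abs_measureReal_sub_le_tvDist hS.measurableSet)
  have upper := measureReal_sub_le_of_isHahnDecomposition hS hT
  -- Since the total masses agree, passing to `Tᶜ` flips the sign of the difference.
  have lower := measureReal_sub_le_of_isHahnDecomposition hS hT.compl
  have hmass_real : μ.real Set.univ = ν.real Set.univ := congrArg ENNReal.toReal hmass
  rw [measureReal_compl hT, measureReal_compl hT, hmass_real] at lower
  rw [abs_sub_comm (μ.real S)]
  exact (abs_le.2 ⟨by linarith, by linarith⟩).trans (le_abs_self _)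

end HahnDecomposition

section ScheffeSet

variable {X : Type*} [MeasurableSpace X] (μ : Measure X)

theorem isHahnDecomposition_withDensity_lt {f g : X → ℝ≥0∞} (hf : Measurable f)
    (hg : Measurable g) :
    IsHahnDecomposition (μ.withDensity f) (μ.withDensity g) {x | f x < g x} := by
  have hS : MeasurableSet {x | f x < g x} := measurableSet_lt hf hg
  refine ⟨hS, ?_, ?_⟩
  · rw [restrict_withDensity hS, restrict_withDensity hS]
    exact withDensity_mono (ae_restrict_of_forall_mem hS fun _ hx => hx.le)
  · rw [restrict_withDensity hS.compl, restrict_withDensity hS.compl]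
    exact withDensity_mono (ae_restrict_of_forall_mem hS.compl fun _ hx => not_lt.1 hx)

theorem isHahnDecomposition_scheffeSet_or {n : ℕ} {h : Fin n → X → ℝ≥0∞}
    (hmeas : ∀ i, Measurable (h i)) (i j : Fin n) :
    IsHahnDecomposition (μ.withDensity (h i)) (μ.withDensity (h j)) (scheffeSet h i j) ∨
      IsHahnDecomposition (μ.withDensity (h j)) (μ.withDensity (h i)) (scheffeSet h i j) := by
  unfold scheffeSet
  split_ifs
  · exact .inl (isHahnDecomposition_withDensity_lt μ (hmeas i) (hmeas j))
  · exact .inr (isHahnDecomposition_withDensity_lt μ (hmeas j) (hmeas i))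

end ScheffeSet

theorem tv_le_semiDist_add_two_opt_general {X : Type*} [MeasurableSpace X]
    (μ : Measure X) {n : ℕ} (H : Fin n → Measure X) [∀ i, IsFiniteMeasure (H i)]
    (P : Measure X) [IsFiniteMeasure P]
    (h : Fin n → X → ℝ≥0∞) (hmeas : ∀ i, Measurable (h i))
    (hdens : ∀ i, H i = μ.withDensity (h i))
    (i j : Fin n) (hmass : H i Set.univ = H j Set.univ) :
    tvDist (H j) P ≤
      |(H j).real (scheffeSet h i j) - P.real (scheffeSet h i j)| + 2 * tvDist (H i) P := by
  have hahn := isHahnDecomposition_scheffeSet_or μ hmeas i j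
  rw [← hdens i, ← hdens j] at hahn
  rcases hahn with hij | hji
  · refine tvDist_le_abs_sub_add_two_mul_tvDist hij.measurableSet ?_
    rw [tvDist_comm, abs_sub_comm]
    exact tvDist_eq_abs_sub_of_isHahnDecomposition hij hmass
  · exact tvDist_le_abs_sub_add_two_mul_tvDist hji.measurableSet
      (tvDist_eq_abs_sub_of_isHahnDecomposition hji hmass.symm)

/-- For every hypothesis `H_j`, `TV(H_j, P) ≤ w_{i*}(H_j) + 2·OPT`, where
`i*` is an index achieving `OPT := min_j TV(H_j, P)` and
`w_{i*}(H_j) = |H_j(S_{i*,j}) - P(S_{i*,j})|`. -/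
theorem tv_le_semiDist_add_two_opt {X : Type*} [MeasurableSpace X]
    (μ : Measure X) [SigmaFinite μ] {n : ℕ} (hn : 0 < n)
    (H : Fin n → Measure X) [∀ i, IsProbabilityMeasure (H i)]
    (P : Measure X) [IsProbabilityMeasure P]
    (h : Fin n → X → ℝ≥0∞) (hmeas : ∀ i, Measurable (h i))
    (hdens : ∀ i, H i = μ.withDensity (h i))
    (istar : Fin n) (hopt : ∀ j, tvDist (H istar) P ≤ tvDist (H j) P) :
    ∀ j, tvDist (H j) P ≤
      |(H j (scheffeSet h istar j)).toReal - (P (scheffeSet h istar j)).toReal|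
        + 2 * tvDist (H istar) P :=
  fun j => tv_le_semiDist_add_two_opt_general μ H P h hmeas hdens istar j
    (by rw [measure_univ, measure_univ])
end

section
/- Let x = [x_1, ..., x_n] be a list of real numbers sorted in non-increasing order. For each i in [n] let x_i' := x_i + delta_i where |delta_i| <= Delta, and let y = [y_1, ..., y_n] be the multiset {x_i'} sorted in non-increasing order. Then for every i in [n], |y_i - x_i| <= Delta. -/
/-! Re-sorting respects the pointwise order: an injection cannot map the initial segment
`{j | j ≤ i}` into the strictly smaller `{j | j < i}`, so some `j ≤ i` is sent to an index `≥ i`.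
If `u` and `v` are non-increasing and `u ≤ v ∘ f` with `f` injective, comparing the values at `i`
through this `j` gives `u ≤ v`. The two halves of the bound are the cases `y ≤ (x + Δ) ∘ σ` and
`x ≤ (y + Δ) ∘ σ⁻¹`. -/

section SortedComparison

variable {ι : Type*} [LinearOrder ι] [LocallyFiniteOrderBot ι] {f : ι → ι}

theorem exists_le_and_le_apply_of_injective (hf : f.Injective) (i : ι) :
    ∃ j ≤ i, i ≤ f j := by
  by_contra! h
  have hmaps : Set.MapsTo f (Finset.Iic i) (Finset.Iio i) := by
    simpa [Set.MapsTo] using h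
  have hcard : (Finset.Iic i).card ≤ (Finset.Iio i).card :=
    Finset.card_le_card_of_injOn f hmaps hf.injOn
  rw [Finset.Iic_eq_cons_Iio, Finset.card_cons] at hcard
  exact Nat.not_succ_le_self _ hcard

theorem le_of_antitone_of_le_comp_injective {α : Type*} [Preorder α] {u v : ι → α}
    (hu : Antitone u) (hv : Antitone v) (hf : f.Injective) (huv : u ≤ v ∘ f) : u ≤ v := by
  intro i
  obtain ⟨j, hji, hij⟩ := exists_le_and_le_apply_of_injective hf i
  calc
    u i ≤ u j := hu hji
    _ ≤ v (f j) := huv j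
    _ ≤ v i := hv hij

end SortedComparison

theorem sorted_perturbation_stable_general {ι α : Type*} [LinearOrder ι]
    [LocallyFiniteOrderBot ι] [AddCommGroup α] [Lattice α] [IsOrderedAddMonoid α] {Δ : α}
    {x δ y : ι → α} (hx : Antitone x) (hδ : ∀ i, |δ i| ≤ Δ) (σ : Equiv.Perm ι)
    (hy : ∀ i, y i = x (σ i) + δ (σ i)) (hysorted : Antitone y) (i : ι) :
    |y i - x i| ≤ Δ := by
  have hupper : y ≤ fun i ↦ x i + Δ := by
    refine le_of_antitone_of_le_comp_injective hysorted (hx.add_const Δ) σ.injective fun j ↦ ?_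
    rw [hy]
    exact add_le_add_right ((le_abs_self _).trans (hδ (σ j))) _
  have hlower : x ≤ fun i ↦ y i + Δ := by
    refine le_of_antitone_of_le_comp_injective hx (hysorted.add_const Δ) σ.symm.injective
      fun k ↦ ?_
    have hk : y (σ.symm k) = x k + δ k := by simp [hy]
    simp only [Function.comp_apply, hk, add_assoc, le_add_iff_nonneg_right]
    exact neg_le_iff_add_nonneg'.mp ((neg_le_abs _).trans (hδ k))
  rw [abs_le', neg_sub, sub_le_iff_le_add', sub_le_iff_le_add']
  exact ⟨hupper i, hlower i⟩

/-- If `x` is a non-increasing list of reals, each entry is perturbed by at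
most `Δ`, and the perturbed values are re-sorted into a non-increasing list
`y`, then each sorted perturbed value is within `Δ` of the corresponding
original value. -/
theorem sorted_perturbation_stable (n : ℕ) (Δ : ℝ)
    (x δ y : Fin n → ℝ)
    (hx : ∀ i j : Fin n, i ≤ j → x j ≤ x i)
    (hδ : ∀ i, |δ i| ≤ Δ)
    (σ : Equiv.Perm (Fin n))
    (hy : ∀ i, y i = x (σ i) + δ (σ i))
    (hysorted : ∀ i j : Fin n, i ≤ j → y j ≤ y i) :
    ∀ i, |y i - x i| ≤ Δ :=
  sorted_perturbation_stable_general (fun i j ↦ hx i j) hδ σ hy fun i j ↦ hysorted i j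
end

section
/- Fix a hypothesis H_i, a public fixed list K = [H_{j_1}, ..., H_{j_t}] of hypotheses, and eta in (0,1]. For a dataset D in X^s, let score_{eta,K,D}(H_i) be the ⌈(eta/2)·t⌉-th largest value among the lift values ŵ_i(H_{j_l})(D) - W̃(H_{j_l})(D) for l = 1, ..., t. Then for any two datasets D, D' in X^s differing in exactly one entry, |score_{eta,K,D}(H_i) - score_{eta,K,D'}(H_i)| <= 2/s; i.e. the score has sensitivity 2/s with respect to the dataset. -/
/-!
Changing one data point moves an empirical mass by at most `1 / s`. Semi-distances, and maxima of
semi-distances, inherit this bound, so a lift value, being a difference of the two, moves by at most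
`2 / s`. The score is an order statistic of the lift values, and order statistics do not amplify
perturbations: the `m`-th largest entry of a list is at least `c` exactly when at least `m` entries
are, and those entries stay above `c - δ` when every entry moves by at most `δ`.
-/

/-- The empirical mass of a set `S` given a dataset `D` of `s` points. -/
noncomputable def empMass {X : Type*} {s : ℕ} (D : Fin s → X) (S : Set X) : ℝ :=
  (1 / (s : ℝ)) * ∑ k : Fin s, S.indicator (fun _ => (1 : ℝ)) (D k)

/-- The `m`-th largest element of a list of reals (1-indexed), obtained by
sorting in non-increasing order. -/
noncomputable def kthLargest (L : List ℝ) (m : ℕ) : ℝ :=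
  (L.insertionSort (· ≥ ·)).getD (m - 1) 0

section OrderStatistics

variable {α : Type*} {m : ℕ}

lemma le_getElem_iff_lt_countP_of_sortedGE [PartialOrder α] [DecidableLE α] {L : List α}
    (hL : L.SortedGE) (c : α) {i : ℕ} (hi : i < L.length) :
    c ≤ L[i] ↔ i < L.countP (c ≤ ·) := by
  have card_eq_countP : (Finset.univ.filter (c ≤ L.get ·)).card = L.countP (c ≤ ·) := by
    conv_rhs => rw [← List.map_getElem_finRange L, List.countP_map, List.countP_eq_length_filter]
    rfl
  rw [← card_eq_countP]
  exact (Tuple.lt_card_ge_iff_apply_ge_of_antitone (j := ⟨i, hi⟩) hL).symm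

lemma le_kthLargest_iff_le_countP {L : List ℝ} (hm : 1 ≤ m) (hmL : m ≤ L.length) (c : ℝ) :
    c ≤ kthLargest L m ↔ m ≤ L.countP (c ≤ ·) := by
  have hi : m - 1 < (L.insertionSort (· ≥ ·)).length := by
    rw [List.length_insertionSort]
    lia
  rw [kthLargest, List.getD_eq_getElem _ _ hi,
    le_getElem_iff_lt_countP_of_sortedGE (List.pairwise_insertionSort _ L).sortedGE,
    (List.perm_insertionSort _ L).countP_eq]
  lia

lemma kthLargest_map_sub_le {L : List α} {f g : α → ℝ} {δ : ℝ} (hm : 1 ≤ m) (hmL : m ≤ L.length)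
    (h : ∀ x ∈ L, f x - δ ≤ g x) :
    kthLargest (L.map f) m - δ ≤ kthLargest (L.map g) m := by
  set c := kthLargest (L.map f) m
  rw [le_kthLargest_iff_le_countP hm (by simpa using hmL)]
  calc m ≤ (L.map f).countP (c ≤ ·) :=
        (le_kthLargest_iff_le_countP hm (by simpa using hmL) c).1 le_rfl
    _ ≤ (L.map g).countP (c - δ ≤ ·) := by
        rw [List.countP_map, List.countP_map]
        refine List.countP_mono_left fun x hx hcx ↦ ?_
        simp only [Function.comp_apply, decide_eq_true_eq] at hcx ⊢
        exact (sub_le_sub_right hcx δ).trans (h x hx)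

end OrderStatistics

/-- A real-valued statistic `f` of datasets indexed by `I` has sensitivity `c` if changing the
dataset in exactly one coordinate changes `f` by at most `c`. -/
def HasSensitivity {I X : Type*} (f : (I → X) → ℝ) (c : ℝ) : Prop :=
  ∀ ⦃D D' : I → X⦄, (∃ k, D k ≠ D' k ∧ ∀ l, l ≠ k → D l = D' l) → |f D - f D'| ≤ c

namespace HasSensitivity

variable {I X α : Type*} {f g : (I → X) → ℝ} {c d : ℝ}

lemma sub (hf : HasSensitivity f c) (hg : HasSensitivity g d) :
    HasSensitivity (fun D ↦ f D - g D) (c + d) := fun D D' h ↦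
  calc |f D - g D - (f D' - g D')| = |f D - f D' - (g D - g D')| := by rw [sub_sub_sub_comm]
    _ ≤ |f D - f D'| + |g D - g D'| := abs_sub _ _
    _ ≤ c + d := add_le_add (hf h) (hg h)

lemma abs_const_sub (hf : HasSensitivity f c) (p : ℝ) : HasSensitivity (fun D ↦ |p - f D|) c :=
  fun D D' h ↦
  calc |(|p - f D| - |p - f D'|)| ≤ |p - f D - (p - f D')| := abs_abs_sub_abs_le_abs_sub _ _
    _ = |f D - f D'| := by rw [sub_sub_sub_cancel_left, abs_sub_comm]
    _ ≤ c := hf h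

lemma finset_sup' {A : Finset α} (hA : A.Nonempty) {f : α → (I → X) → ℝ}
    (hf : ∀ a ∈ A, HasSensitivity (f a) c) :
    HasSensitivity (fun D ↦ A.sup' hA fun a ↦ f a D) c := by
  have sup'_le_add {u v : α → ℝ} (huv : ∀ a ∈ A, u a - v a ≤ c) : A.sup' hA u ≤ c + A.sup' hA v :=
    Finset.sup'_le hA u fun a ha ↦
      (sub_le_iff_le_add.1 (huv a ha)).trans (add_le_add_right (Finset.le_sup' v ha) c)
  intro D D' h
  have habs a (ha : a ∈ A) := abs_sub_le_iff.1 (hf a ha h)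
  exact abs_sub_le_iff.2 ⟨sub_le_iff_le_add.2 <| sup'_le_add fun a ha ↦ (habs a ha).1,
    sub_le_iff_le_add.2 <| sup'_le_add fun a ha ↦ (habs a ha).2⟩

lemma kthLargest_map {L : List α} {f : α → (I → X) → ℝ} {m : ℕ} (hm : 1 ≤ m) (hmL : m ≤ L.length)
    (hf : ∀ a ∈ L, HasSensitivity (f a) c) :
    HasSensitivity (fun D ↦ kthLargest (L.map fun a ↦ f a D) m) c := by
  intro D D' h
  have habs a (ha : a ∈ L) := abs_sub_le_iff.1 (hf a ha h)
  exact abs_sub_le_iff.2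
    ⟨sub_le_comm.1 <| kthLargest_map_sub_le hm hmL fun a ha ↦ sub_le_comm.1 (habs a ha).1,
      sub_le_comm.1 <| kthLargest_map_sub_le hm hmL fun a ha ↦ sub_le_comm.1 (habs a ha).2⟩

end HasSensitivity

section Score

variable {X ι κ : Type*} {s : ℕ}

lemma hasSensitivity_empMass (S : Set X) :
    HasSensitivity (fun D : Fin s → X ↦ empMass D S) (1 / s) := by
  rintro D D' ⟨k, -, hk⟩
  let χ : X → ℝ := S.indicator fun _ ↦ 1
  have hχ : |χ (D k) - χ (D' k)| ≤ 1 := by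
    by_cases h : D k ∈ S <;> by_cases h' : D' k ∈ S <;> simp [χ, h, h']
  calc |empMass D S - empMass D' S| = |1 / (s : ℝ) * ∑ l, (χ (D l) - χ (D' l))| := by
        rw [Finset.sum_sub_distrib, mul_sub, empMass, empMass]
    _ = 1 / s * |χ (D k) - χ (D' k)| := by
        rw [Fintype.sum_eq_single k fun l hl ↦ by rw [hk l hl, sub_self], abs_mul,
          abs_of_nonneg (by positivity)]
    _ ≤ 1 / s := mul_le_of_le_one_right (by positivity) hχ

/-- The empirical semi-distance `|H(S) - P̂_D(S)|` of a hypothesis `H` to the dataset `D` along the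
Scheffé set `S`. Only the mass `p = H(S)` of the hypothesis enters. -/
noncomputable def semiDist (S : Set X) (p : ℝ) (D : Fin s → X) : ℝ :=
  |p - empMass D S|

/-- The proxy distance of a hypothesis `H` to the dataset `D`: its largest semi-distance along the
Scheffé sets `S k`, `k ∈ A`, where `p k = H(S k)`. -/
noncomputable def proxyDist {A : Finset ι} (hA : A.Nonempty) (S : ι → Set X) (p : ι → ℝ)
    (D : Fin s → X) : ℝ :=
  A.sup' hA fun k ↦ semiDist (S k) (p k) D

lemma hasSensitivity_semiDist (S : Set X) (p : ℝ) :
    HasSensitivity (semiDist (s := s) S p) (1 / s) :=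
  (hasSensitivity_empMass S).abs_const_sub p

lemma hasSensitivity_proxyDist {A : Finset ι} (hA : A.Nonempty) (S : ι → Set X) (p : ι → ℝ) :
    HasSensitivity (proxyDist (s := s) hA S p) (1 / s) :=
  .finset_sup' hA fun k _ ↦ hasSensitivity_semiDist (S k) (p k)

theorem score_sensitivity_general {K : List κ} {m : ℕ} (hm : 1 ≤ m) (hmK : m ≤ K.length)
    {A : Finset ι} (hA : A.Nonempty) (T : κ → Set X) (a : κ → ℝ) (U : κ → ι → Set X)
    (b : κ → ι → ℝ) :
    HasSensitivity (fun D : Fin s → X ↦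
      kthLargest (K.map fun j ↦ semiDist (T j) (a j) D - proxyDist hA (U j) (b j) D) m)
      (2 / s) := by
  rw [← one_add_one_eq_two, add_div]
  exact .kthLargest_map hm hmK fun j _ ↦
    (hasSensitivity_semiDist (T j) (a j)).sub (hasSensitivity_proxyDist hA (U j) (b j))

lemma one_le_ceil_half_mul {η : ℝ} (hη : 0 < η) {t : ℕ} (ht : 0 < t) :
    1 ≤ ⌈η / 2 * (t : ℝ)⌉₊ :=
  Nat.one_le_ceil_iff.2 (by positivity)

lemma ceil_half_mul_le {η : ℝ} (hη : η ≤ 2) (t : ℕ) : ⌈η / 2 * (t : ℝ)⌉₊ ≤ t :=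
  Nat.ceil_le.2 (mul_le_of_le_one_left t.cast_nonneg (by linarith))

end Score

/-- The score of `H_i` w.r.t. a public list `K` of `t` hypotheses:
the `⌈(η/2)·t⌉`-th largest lift value `ŵ_i(H_{j_l})(D) - W̃(H_{j_l})(D)`
has sensitivity `2/s` with respect to the dataset `D`. Here, for each entry
`l` of `K`, `ŵ_i(H_{j_l})(D) = |a l - P̂_D(T l)|` (with `T l` the Scheffé set
`S_{i, j_l}` and `a l = H_{j_l}(S_{i, j_l})`) and
`W̃(H_{j_l})(D) = max_{k ∈ A} |b l k - P̂_D(U l k)|` (with `U l k` the Scheffé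
set `S_{k, j_l}` and `b l k = H_{j_l}(S_{k, j_l})`). -/
theorem score_sensitivity {X ι : Type*} [MeasurableSpace X]
    (s t : ℕ) (hs : 0 < s) (ht : 0 < t)
    (η : ℝ) (hη : η ∈ Set.Ioc (0 : ℝ) 1)
    (T : Fin t → Set X) (hT : ∀ l, MeasurableSet (T l))
    (a : Fin t → ℝ) (ha : ∀ l, a l ∈ Set.Icc (0 : ℝ) 1)
    (A : Finset ι) (hA : A.Nonempty)
    (U : Fin t → ι → Set X) (hU : ∀ l k, MeasurableSet (U l k))
    (b : Fin t → ι → ℝ) (hb : ∀ l k, b l k ∈ Set.Icc (0 : ℝ) 1)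
    (score : (Fin s → X) → ℝ)
    (hscore : ∀ D, score D =
      kthLargest
        (List.ofFn fun l : Fin t =>
          |a l - empMass D (T l)| -
            A.sup' hA (fun k => |b l k - empMass D (U l k)|))
        ⌈(η / 2) * (t : ℝ)⌉₊)
    (D D' : Fin s → X)
    (hdiff : ∃ k : Fin s, D k ≠ D' k ∧ ∀ l : Fin s, l ≠ k → D l = D' l) :
    |score D - score D'| ≤ 2 / (s : ℝ) := by
  simp only [hscore, List.ofFn_eq_map]
  exact score_sensitivity_general (one_le_ceil_half_mul hη.1 ht)
    (by simpa using ceil_half_mul_le (hη.2.trans one_le_two) t) hA T a U b hdiff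
end

section
/- Let n >= 1, c > 0, sigma' > 0 and eta' in (0,1] with exp(-c·sigma') < 1/2. Let W_1, ..., W_n and W'_1, ..., W'_n be real numbers with W'_j >= W_j for all j, set D_j := W'_j - W_j, Z := sum over j of exp(-c·W_j), and let Q be the probability distribution on [n] with Q(j) = exp(-c·W_j)/Z. If the Q-probability of the set {j : D_j >= sigma'} is at least eta', then sum over j of exp(-c·W'_j) <= (1 - eta'/2)·Z. -/
/-!
A lift of at least `σ` multiplies the weight `exp (-c * W j)` by at most `exp (-c * σ)`, and no
weight increases. Hence the normalization constant loses at least the fraction `1 - exp (-c * σ)`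
of the weight of the lifted indices, which is at least a fraction `η` of the total.
-/

open Finset

theorem sum_le_sum_sub_mul_sum_filter {ι R : Type*} [Ring R] [PartialOrder R]
    [IsOrderedAddMonoid R] (s : Finset ι) (p : ι → Prop) [DecidablePred p] {w w' : ι → R} {r : R}
    (hp : ∀ j ∈ s, p j → w' j ≤ r * w j) (hnp : ∀ j ∈ s, ¬ p j → w' j ≤ w j) :
    ∑ j ∈ s, w' j ≤ ∑ j ∈ s, w j - (1 - r) * ∑ j ∈ s with p j, w j := by
  calc ∑ j ∈ s, w' j
      = ∑ j ∈ s with p j, w' j + ∑ j ∈ s with ¬ p j, w' j :=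
        (sum_filter_add_sum_filter_not s p w').symm
    _ ≤ ∑ j ∈ s with p j, r * w j + ∑ j ∈ s with ¬ p j, w j := by
        gcongr with j hj j hj
        · exact hp j (mem_filter.1 hj).1 (mem_filter.1 hj).2
        · exact hnp j (mem_filter.1 hj).1 (mem_filter.1 hj).2
    _ = ∑ j ∈ s, w j - (1 - r) * ∑ j ∈ s with p j, w j := by
        rw [← sum_filter_add_sum_filter_not s p w, ← mul_sum]
        noncomm_ring

theorem exp_neg_mul_le_of_le_sub {c σ x y : ℝ} (hc : 0 ≤ c) (h : σ ≤ y - x) :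
    Real.exp (-c * y) ≤ Real.exp (-c * σ) * Real.exp (-c * x) := by
  rw [← Real.exp_add, Real.exp_le_exp]
  linarith [mul_le_mul_of_nonneg_left h hc]

theorem normalization_decrease_general {ι : Type*} {s : Finset ι} (hs : s.Nonempty)
    {c σ η : ℝ} (hc : 0 ≤ c) (hσ : 0 ≤ σ) {W W' : ι → ℝ} (hWW' : ∀ j ∈ s, W j ≤ W' j)
    (hprompt : η ≤
      (∑ j ∈ s with σ ≤ W' j - W j, Real.exp (-c * W j)) / ∑ j ∈ s, Real.exp (-c * W j)) :
    ∑ j ∈ s, Real.exp (-c * W' j) ≤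
      (1 - (1 - Real.exp (-c * σ)) * η) * ∑ j ∈ s, Real.exp (-c * W j) := by
  have hZ : 0 < ∑ j ∈ s, Real.exp (-c * W j) := sum_pos (fun j _ ↦ Real.exp_pos _) hs
  have hmass : η * ∑ j ∈ s, Real.exp (-c * W j) ≤
      ∑ j ∈ s with σ ≤ W' j - W j, Real.exp (-c * W j) := (le_div_iff₀ hZ).1 hprompt
  have hr : 0 ≤ 1 - Real.exp (-c * σ) :=
    sub_nonneg.2 (Real.exp_le_one_iff.2 (by linarith [mul_nonneg hc hσ]))
  calc ∑ j ∈ s, Real.exp (-c * W' j)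
      ≤ ∑ j ∈ s, Real.exp (-c * W j) -
          (1 - Real.exp (-c * σ)) * ∑ j ∈ s with σ ≤ W' j - W j, Real.exp (-c * W j) :=
        sum_le_sum_sub_mul_sum_filter s _
          (fun j _ hlift ↦ exp_neg_mul_le_of_le_sub hc hlift)
          (fun j hj _ ↦ by
            simpa using exp_neg_mul_le_of_le_sub hc (sub_nonneg.2 (hWW' j hj)))
    _ ≤ ∑ j ∈ s, Real.exp (-c * W j) -
          (1 - Real.exp (-c * σ)) * (η * ∑ j ∈ s, Real.exp (-c * W j)) := by gcongr
    _ = (1 - (1 - Real.exp (-c * σ)) * η) * ∑ j ∈ s, Real.exp (-c * W j) := by ring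

/-- Normalization-decrease lemma for the exponential mechanism (finite-sum
form): if the updated proxy distances `W'` dominate `W`, the exponential
mechanism distribution `Q(j) ∝ exp(-c·W j)` assigns mass at least `η'` to the
indices whose lift `W' j - W j` is at least `σ'`, and `exp(-c·σ') < 1/2`, then
the new normalization constant drops by a factor `1 - η'/2`. -/
theorem normalization_decrease (n : ℕ) (hn : 1 ≤ n)
    (c σ' η' : ℝ) (hc : 0 < c) (hσ : 0 < σ') (hη : η' ∈ Set.Ioc (0 : ℝ) 1)
    (hexp : Real.exp (-c * σ') < 1 / 2)
    (W W' : Fin n → ℝ) (hWW' : ∀ j, W j ≤ W' j)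
    (hprompt : η' ≤
      (∑ j ∈ Finset.univ.filter (fun j : Fin n => σ' ≤ W' j - W j),
          Real.exp (-c * W j)) /
        (∑ j : Fin n, Real.exp (-c * W j))) :
    (∑ j : Fin n, Real.exp (-c * W' j)) ≤
      (1 - η' / 2) * ∑ j : Fin n, Real.exp (-c * W j) := by
  have hs : (univ : Finset (Fin n)).Nonempty := ⟨⟨0, hn⟩, mem_univ _⟩
  refine (normalization_decrease_general hs hc.le hσ.le (fun j _ ↦ hWW' j) hprompt).trans ?_
  gcongr
  linarith [mul_lt_mul_of_pos_right hexp hη.1]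
end

section
/- Let n >= 1, c > 0, eta' in (0,1], and OPT in [0,1]. For each round l = 0, 1, ..., t let W^{(l)}_1, ..., W^{(l)}_n be nonnegative reals with W^{(0)}_j = 0 for all j, define Z^{(l)} := sum over j of exp(-c·W^{(l)}_j), and suppose Z^{(l)} <= (1 - eta'/2)·Z^{(l-1)} for every l in {1, ..., t}. Suppose moreover there exists an index j* with W^{(t)}_{j*} <= OPT. Then t <= (log n + c·OPT) / log(1 + eta'/2). -/
/-!
The mass `Z^(l) = ∑ j, exp (-c * W l j)` starts at `n` and is multiplied by at most
`1 - η'/2 ≤ (1 + η'/2)⁻¹` per round, yet the single term at `jstar` keeps it at least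
`exp (-c * OPT)`. Hence `exp (-c * OPT) ≤ (1 + η'/2)^(-t) * n`, and taking logarithms bounds `t`.
-/

lemma one_sub_le_inv_one_add {K : Type*} [Field K] [LinearOrder K] [IsStrictOrderedRing K] {x : K}
    (hx : 0 < 1 + x) : 1 - x ≤ (1 + x)⁻¹ := by
  rw [← one_div, le_div_iff₀ hx]
  calc (1 - x) * (1 + x) = 1 - x ^ 2 := by ring
    _ ≤ 1 := sub_le_self 1 (sq_nonneg x)

lemma natCast_le_of_exp_neg_le_pow_mul {q s N : ℝ} (hq0 : 0 < q) (hq1 : q < 1) {t : ℕ}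
    (h : Real.exp (-s) ≤ q ^ t * N) : (t : ℝ) ≤ (Real.log N + s) / Real.log q⁻¹ := by
  have hN : 0 < N := pos_of_mul_pos_right ((Real.exp_pos _).trans_le h) (pow_nonneg hq0.le t)
  have log_le : -s ≤ t * Real.log q + Real.log N :=
    calc -s = Real.log (Real.exp (-s)) := (Real.log_exp _).symm
      _ ≤ Real.log (q ^ t * N) := Real.log_le_log (Real.exp_pos _) h
      _ = t * Real.log q + Real.log N := by
        rw [Real.log_mul (pow_pos hq0 t).ne' hN.ne', Real.log_pow]
  rw [le_div_iff₀ (Real.log_pos ((one_lt_inv₀ hq0).mpr hq1)), Real.log_inv]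
  linarith

/-- The normalization constant of the exponential mechanism that draws `j` with probability
proportional to `exp (-c * w j)`. -/
noncomputable def partitionFn {ι : Type*} [Fintype ι] (c : ℝ) (w : ι → ℝ) : ℝ :=
  ∑ j, Real.exp (-c * w j)

section partitionFn

variable {ι : Type*} [Fintype ι] {c : ℝ} {w : ι → ℝ}

lemma partitionFn_nonneg : 0 ≤ partitionFn c w :=
  Finset.sum_nonneg fun _ _ => Real.exp_nonneg _

lemma partitionFn_le_card (hc : 0 ≤ c) (hw : ∀ j, 0 ≤ w j) :
    partitionFn c w ≤ Fintype.card ι :=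
  calc partitionFn c w ≤ ∑ _j : ι, (1 : ℝ) := Finset.sum_le_sum fun j _ =>
        Real.exp_le_one_iff.mpr (mul_nonpos_of_nonpos_of_nonneg (neg_nonpos.mpr hc) (hw j))
    _ = Fintype.card ι := by simp

lemma exp_neg_le_partitionFn (hc : 0 ≤ c) {b : ℝ} {j : ι} (hj : w j ≤ b) :
    Real.exp (-(c * b)) ≤ partitionFn c w :=
  calc Real.exp (-(c * b)) = Real.exp (-c * b) := by rw [neg_mul]
    _ ≤ Real.exp (-c * w j) :=
        Real.exp_le_exp.mpr (mul_le_mul_of_nonpos_left hj (neg_nonpos.mpr hc))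
    _ ≤ partitionFn c w :=
        Finset.single_le_sum (f := fun i => Real.exp (-c * w i))
          (fun _ _ => Real.exp_nonneg _) (Finset.mem_univ j)

end partitionFn

lemma natCast_le_of_partitionFn_succ_le_mul {ι : Type*} [Fintype ι] {c q b : ℝ} (hc : 0 ≤ c)
    (hq0 : 0 < q) (hq1 : q < 1) {t : ℕ} {W : ℕ → ι → ℝ} (hW0 : ∀ j, 0 ≤ W 0 j)
    (hZ : ∀ l < t, partitionFn c (W (l + 1)) ≤ q * partitionFn c (W l))
    {j : ι} (hj : W t j ≤ b) :
    (t : ℝ) ≤ (Real.log (Fintype.card ι) + c * b) / Real.log q⁻¹ := by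
  apply natCast_le_of_exp_neg_le_pow_mul hq0 hq1
  calc Real.exp (-(c * b)) ≤ partitionFn c (W t) := exp_neg_le_partitionFn hc hj
    _ ≤ q ^ t * partitionFn c (W 0) := le_geom (u := fun l => partitionFn c (W l)) hq0.le t hZ
    _ ≤ q ^ t * Fintype.card ι :=
        mul_le_mul_of_nonneg_left (partitionFn_le_card hc hW0) (pow_nonneg hq0.le t)

theorem round_bound_general {ι : Type*} [Fintype ι] {c x b : ℝ} (hc : 0 ≤ c) (hx : 0 < x)
    {t : ℕ} {W : ℕ → ι → ℝ} (hW0 : ∀ j, 0 ≤ W 0 j)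
    (hZ : ∀ l < t, partitionFn c (W (l + 1)) ≤ (1 - x) * partitionFn c (W l))
    {j : ι} (hj : W t j ≤ b) :
    (t : ℝ) ≤ (Real.log (Fintype.card ι) + c * b) / Real.log (1 + x) := by
  have one_lt : 1 < 1 + x := lt_add_of_pos_right 1 hx
  have one_add_pos : 0 < 1 + x := one_pos.trans one_lt
  have decay (l : ℕ) (hl : l < t) :
      partitionFn c (W (l + 1)) ≤ (1 + x)⁻¹ * partitionFn c (W l) :=
    (hZ l hl).trans <|
      mul_le_mul_of_nonneg_right (one_sub_le_inv_one_add one_add_pos) partitionFn_nonneg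
  simpa only [inv_inv] using natCast_le_of_partitionFn_succ_le_mul hc
    (inv_pos.mpr one_add_pos) (inv_lt_one_of_one_lt₀ one_lt) hW0 decay hj

/-- Bound on the number of rounds: if the proxy distances `W l j` start at 0,
the normalization constants `Z^(l) = ∑_j exp(-c·W l j)` decrease geometrically
by a factor `1 - η'/2` at each round, and some index `j*` (the optimal
hypothesis) keeps `W t j* ≤ OPT`, then
`t ≤ (log n + c·OPT) / log(1 + η'/2)`. -/
theorem round_bound (n : ℕ) (hn : 1 ≤ n)
    (c : ℝ) (hc : 0 < c) (η' : ℝ) (hη : η' ∈ Set.Ioc (0 : ℝ) 1)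
    (OPT : ℝ) (hOPT : OPT ∈ Set.Icc (0 : ℝ) 1)
    (t : ℕ) (W : ℕ → Fin n → ℝ)
    (hWnn : ∀ l j, 0 ≤ W l j)
    (hW0 : ∀ j, W 0 j = 0)
    (hZ : ∀ l, 1 ≤ l → l ≤ t →
      (∑ j : Fin n, Real.exp (-c * W l j)) ≤
        (1 - η' / 2) * ∑ j : Fin n, Real.exp (-c * W (l - 1) j))
    (jstar : Fin n) (hjstar : W t jstar ≤ OPT) :
    (t : ℝ) ≤ (Real.log n + c * OPT) / Real.log (1 + η' / 2) := by
  simpa only [Fintype.card_fin] using round_bound_general hc.le (half_pos hη.1)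
    (fun j => (hW0 j).ge) (fun l hl => hZ (l + 1) l.succ_pos hl) hjstar
end
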